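/- Suppose ε_ħ = ħ^{3/2}. Then for the periodized coherent state ψ_ħ with ξ₀ ≠ 0, for every primitive rank-1 sublattice Λ ⊆ ℤ² and every smooth compactly supported a : 𝕋² × ℝ → ℂ: (i) if ⟨ξ₀, v_Λ⟩ ≠ 0, then W_{Λ,ħ}(a) → 0 as ħ → 0⁺; (ii) if ⟨ξ₀, v_Λ⟩ = 0, then W_{Λ,ħ}(a) → ∫_{ℝ²} |φ̂(ξ)|² I_Λ(a)(x₀, 2π H_Λ(ξ)) dξ as ħ → 0⁺, where I_Λ(a)(x, η) := L_Λ^{−1} ∫₀^{L_Λ} a(x + t v_Λ^⊥/L_Λ, η) dt. -/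

import Mathlib

open MeasureTheory Filter Real
open scoped Topology

noncomputable section

/-- The Euclidean inner product on `ℝ²`. -/
def dot2 (v w : ℝ × ℝ) : ℝ := v.1 * w.1 + v.2 * w.2

/-- The Euclidean norm on `ℝ²`. -/
def nrm2 (v : ℝ × ℝ) : ℝ := Real.sqrt (dot2 v v)

/-- The canonical embedding `ℤ² ↪ ℝ²`. -/
def toR2 (m : ℤ × ℤ) : ℝ × ℝ := ((m.1 : ℝ), (m.2 : ℝ))

/-- Rotation of an integer vector by `+π/2`. -/
def perpZ (v : ℤ × ℤ) : ℤ × ℤ := (-v.2, v.1)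

/-- `v` generates a primitive rank-1 sublattice `Λ = ℤ v` of `ℤ²`. -/
def Primitive (v : ℤ × ℤ) : Prop := Int.gcd v.1 v.2 = 1

/-- `L_Λ = ‖v_Λ‖`. -/
def LL (v : ℤ × ℤ) : ℝ := nrm2 (toR2 v)

/-- `H_Λ(ξ) = ⟨ξ, v_Λ⟩ / L_Λ`, where `v` is the generator `v_Λ` of `Λ`. -/
def HH (v : ℤ × ℤ) (ξ : ℝ × ℝ) : ℝ := dot2 ξ (toR2 v) / LL v

/-- Integral over a fundamental domain of the torus `𝕋² = ℝ²/ℤ²`. -/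
def torusInt (f : ℝ × ℝ → ℂ) : ℂ :=
  ∫ x in Set.Icc ((0, 0) : ℝ × ℝ) ((1, 1) : ℝ × ℝ), f x

/-- `e^{it}`. -/
def expI (t : ℝ) : ℂ := Complex.exp (Complex.I * (t : ℂ))

/-- The `j`-th Fourier coefficient (in `x`) of `a : 𝕋² × ℝ → ℂ`:
`â(j, η) = ∫_{𝕋²} a(x, η) e^{-2πi j·x} dx`. -/
def fcoef (a : ℝ × ℝ → ℝ → ℂ) (j : ℤ × ℤ) (η : ℝ) : ℂ :=
  torusInt fun x => a x η * expI (-(2 * π * dot2 (toR2 j) x))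

/-- The Fourier transform on `ℝ²`: `φ̂(ξ) = ∫_{ℝ²} φ(x) e^{-2πi x·ξ} dx`. -/
def FT (φ : ℝ × ℝ → ℂ) (ξ : ℝ × ℝ) : ℂ :=
  ∫ x : ℝ × ℝ, φ x * expI (-(2 * π * dot2 x ξ))

/-- The `m`-th Fourier coefficient of the periodized coherent state:
`ψ̂_hb(m) = hb^{1/2} e^{-2πi (m - ξ₀/hb)·x₀} φ̂(hb^{1/2}(m - ξ₀/hb))`. -/
def psiF (φ : ℝ × ℝ → ℂ) (x₀ ξ₀ : ℝ × ℝ) (hb : ℝ) (m : ℤ × ℤ) : ℂ :=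
  (Real.sqrt hb : ℂ) * expI (-(2 * π * dot2 (toR2 m - hb⁻¹ • ξ₀) x₀)) *
    FT φ (Real.sqrt hb • (toR2 m - hb⁻¹ • ξ₀))

/-- The two-microlocal quantity
`W_{Λ,hb}(a) = Σ_{m ∈ ℤ²} Σ_{j ∈ Λ} conj(ψ̂_hb(m)) ψ̂_hb(m−j) â(j, 2π hb² ε_hb⁻¹ H_Λ(m))`,
for the periodized coherent state, where `Λ = ℤ w` and `e = ε_hb`. -/
def Wcs (φ : ℝ × ℝ → ℂ) (x₀ ξ₀ : ℝ × ℝ) (w : ℤ × ℤ) (a : ℝ × ℝ → ℝ → ℂ)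
    (hb e : ℝ) : ℂ :=
  ∑' m : ℤ × ℤ, ∑' c : ℤ,
    (starRingEnd ℂ) (psiF φ x₀ ξ₀ hb m) * psiF φ x₀ ξ₀ hb (m - c • w) *
      fcoef a (c • w) (2 * π * hb ^ 2 / e * HH w (toR2 m))

/-- The average of `a` along the periodic flow in the direction `v_Λ^⊥/L_Λ`:
`I_Λ(a)(x, η) = L_Λ⁻¹ ∫₀^{L_Λ} a(x + t v_Λ^⊥/L_Λ, η) dt`. -/
def IΛ (w : ℤ × ℤ) (a : ℝ × ℝ → ℝ → ℂ) (x : ℝ × ℝ) (η : ℝ) : ℂ :=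
  ((LL w : ℝ) : ℂ)⁻¹ * ∫ t in (0:ℝ)..(LL w), a (x + (t / LL w) • toR2 (perpZ w)) η

/-!
Write `r = √ħ`. Since `ψ̂_ħ(m) = r e^{…} φ̂(ξ)` at the point `ξ = r (m - ξ₀ / ħ)` of the lattice
`r (ℤ² - ξ₀ / ħ)`, the sum over `m` in `W_{Λ,ħ}(a)` is a Riemann sum with cells of area `r² = ħ`;
its summand is dominated by means of the decay of `φ̂` and the summability over `Λ` of the
coefficients of `a`, so it may be replaced by the integral of its pointwise limit. For
`ε_ħ = ħ^{3/2}` the second argument of the symbol is `2π r H_Λ(m) = 2π (H_Λ(ξ) + H_Λ(ξ₀) / r)`. If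
`⟨ξ₀, v_Λ⟩ ≠ 0`, it leaves the support of `a` as `r → 0`. Otherwise it is `2π H_Λ(ξ)`, the shifts
`ξ - r j` with `j ∈ Λ` tend to `ξ`, and `∑_{j ∈ Λ} â(j, η) e^{2πi j·x₀}` is the Fourier series at
`x₀` of the average of `a` in the direction orthogonal to `Λ`, which is `I_Λ(a)`.
-/

/-! ### Plane geometry -/

lemma hasCompactSupport_of_abs_lt {E : Type*} [Zero E] {f : ℝ × ℝ → E} {r : ℝ}
    (hf : ∀ x, f x ≠ 0 → |x.1| < r ∧ |x.2| < r) : HasCompactSupport f :=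
  .of_support_subset_isCompact (isCompact_closedBall (0 : ℝ × ℝ) r) fun x hx =>
    mem_closedBall_zero_iff.2 (max_le (hf x hx).1.le (hf x hx).2.le)

lemma toR2_zsmul (c : ℤ) (n : ℤ × ℤ) : toR2 (c • n) = (c : ℝ) • toR2 n := by
  simp [toR2]

lemma dot2_smul_left (r : ℝ) (v w : ℝ × ℝ) : dot2 (r • v) w = r * dot2 v w := by
  simp [dot2]
  ring

lemma dot2_toR2_self_pos {w : ℤ × ℤ} (hw : w ≠ 0) : 0 < dot2 (toR2 w) (toR2 w) := by
  have h : 0 < w.1 * w.1 + w.2 * w.2 := by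
    rw [Ne, Prod.ext_iff, not_and_or] at hw
    rcases hw with h | h
    · exact add_pos_of_pos_of_nonneg (mul_self_pos.2 h) (mul_self_nonneg _)
    · exact add_pos_of_nonneg_of_pos (mul_self_nonneg _) (mul_self_pos.2 h)
  simp only [dot2, toR2]
  exact_mod_cast h

lemma LL_pos {w : ℤ × ℤ} (hw : w ≠ 0) : 0 < LL w :=
  Real.sqrt_pos.2 (dot2_toR2_self_pos hw)

lemma Primitive.ne_zero {w : ℤ × ℤ} (hw : Primitive w) : w ≠ 0 := by
  rintro rfl
  simp [Primitive] at hw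

lemma Primitive.exists_dual {w : ℤ × ℤ} (hw : Primitive w) :
    ∃ u : ℤ × ℤ, u.1 * w.1 + u.2 * w.2 = 1 := by
  obtain ⟨p, q, bezout⟩ := Int.isCoprime_iff_gcd_eq_one.2 hw
  exact ⟨(p, q), bezout⟩

lemma continuous_HH (w : ℤ × ℤ) : Continuous (HH w) := by
  unfold HH dot2
  fun_prop

lemma HH_add (w : ℤ × ℤ) (ξ ζ : ℝ × ℝ) : HH w (ξ + ζ) = HH w ξ + HH w ζ := by
  simp [HH, dot2]
  ring

lemma HH_smul (w : ℤ × ℤ) (r : ℝ) (ξ : ℝ × ℝ) : HH w (r • ξ) = r * HH w ξ := by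
  rw [HH, HH, dot2_smul_left, mul_div_assoc]

/-! ### The exponential -/

lemma expI_add (s t : ℝ) : expI (s + t) = expI s * expI t := by
  simp [expI, mul_add, Complex.exp_add]

lemma norm_expI (t : ℝ) : ‖expI t‖ = 1 := by
  rw [expI, mul_comm, Complex.norm_exp_ofReal_mul_I]

lemma expI_two_pi_mul_intCast (n : ℤ) : expI (2 * π * n) = 1 := by
  rw [expI, ← Complex.exp_int_mul_two_pi_mul_I n]
  congr 1
  push_cast
  ring

lemma conj_expI (t : ℝ) : (starRingEnd ℂ) (expI t) = expI (-t) := by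
  simp [expI, ← Complex.exp_conj]

lemma contDiff_expI {n : WithTop ℕ∞} : ContDiff ℝ n expI :=
  (contDiff_const.mul Complex.ofRealCLM.contDiff).cexp

@[fun_prop]
lemma continuous_expI : Continuous expI := contDiff_expI.continuous (n := 0)

lemma hasDerivAt_expI (t : ℝ) : HasDerivAt expI (Complex.I * expI t) t := by
  have h := (Complex.ofRealCLM.hasDerivAt (x := t)).const_mul Complex.I
  convert! h.cexp using 1
  simp [expI, mul_comm]

/-! ### Integration over the torus -/

/-- `ℤ²`-periodic functions on the plane, that is, functions on the torus `𝕋² = ℝ²/ℤ²`. -/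
def TorusPeriodic {E : Type*} (f : ℝ × ℝ → E) : Prop :=
  ∀ (x : ℝ × ℝ) (j : ℤ × ℤ), f (x + toR2 j) = f x

lemma setIntegral_setIntegral_swap_of_isCompact {X Y E : Type*} [TopologicalSpace X]
    [TopologicalSpace Y] [SecondCountableTopology X] [SecondCountableTopology Y]
    [MeasurableSpace X] [MeasurableSpace Y] [OpensMeasurableSpace X] [OpensMeasurableSpace Y]
    [T2Space X] [T2Space Y] [NormedAddCommGroup E] [NormedSpace ℝ E]
    {μ : Measure X} {ν : Measure Y} [SFinite μ] [SFinite ν] [IsFiniteMeasureOnCompacts (μ.prod ν)]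
    {K : Set X} {L : Set Y} (hK : IsCompact K) (hL : IsCompact L) {f : X → Y → E}
    (hf : Continuous (Function.uncurry f)) :
    ∫ x in K, ∫ y in L, f x y ∂ν ∂μ = ∫ y in L, ∫ x in K, f x y ∂μ ∂ν := by
  apply integral_integral_swap
  rw [Measure.prod_restrict]
  exact hf.continuousOn.integrableOn_compact (hK.prod hL)

lemma torusInt_eq_intervalIntegral {f : ℝ × ℝ → ℂ} (hf : Continuous f) :
    torusInt f = ∫ s in (0 : ℝ)..1, ∫ t in (0 : ℝ)..1, f (s, t) := by
  simp_rw [intervalIntegral.integral_of_le zero_le_one, ← integral_Icc_eq_integral_Ioc]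
  rw [torusInt, ← Set.Icc_prod_Icc, Measure.volume_eq_prod, setIntegral_prod]
  exact hf.continuousOn.integrableOn_compact (isCompact_Icc.prod isCompact_Icc)

lemma torusInt_const (c : ℂ) : torusInt (fun _ => c) = c := by
  simp [torusInt_eq_intervalIntegral continuous_const]

lemma norm_torusInt_le {f : ℝ × ℝ → ℂ} {C : ℝ} (hf : ∀ x, ‖f x‖ ≤ C) : ‖torusInt f‖ ≤ C := by
  have hvol : volume.real (Set.Icc ((0, 0) : ℝ × ℝ) (1, 1)) = 1 := by
    simp [measureReal_def, ← Set.Icc_prod_Icc, Measure.volume_eq_prod]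
  have h := norm_setIntegral_le_of_norm_le_const (μ := volume)
    (isCompact_Icc (a := ((0, 0) : ℝ × ℝ)) (b := (1, 1))).measure_lt_top fun x _ => hf x
  rwa [hvol, mul_one] at h

lemma intervalIntegral_comp_add_right_of_periodic {E : Type*} [NormedAddCommGroup E]
    [NormedSpace ℝ E] {f : ℝ → E} {T : ℝ} (hf : Function.Periodic f T) (y : ℝ) :
    ∫ t in (0 : ℝ)..T, f (t + y) = ∫ t in (0 : ℝ)..T, f t := by
  have h := hf.intervalIntegral_add_eq y 0
  rw [zero_add] at h
  rw [intervalIntegral.integral_comp_add_right, zero_add, add_comm T y, h]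

lemma TorusPeriodic.torusInt_comp_add_right {f : ℝ × ℝ → ℂ} (hp : TorusPeriodic f)
    (hf : Continuous f) (y : ℝ × ℝ) : torusInt (fun x => f (x + y)) = torusInt f := by
  have per_snd (s : ℝ) : Function.Periodic (fun t => f (s, t)) 1 := fun t => by
    simpa [toR2] using hp (s, t) (0, 1)
  have per_fst : Function.Periodic (fun s => ∫ t in (0 : ℝ)..1, f (s, t)) 1 := fun s => by
    simp only [show ∀ t, f (s + 1, t) = f (s, t) from fun t => by
      simpa [toR2] using hp (s, t) (1, 0)]
  calc torusInt (fun x => f (x + y))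
      = ∫ s in (0 : ℝ)..1, ∫ t in (0 : ℝ)..1, f (s + y.1, t + y.2) :=
        torusInt_eq_intervalIntegral (by fun_prop)
    _ = ∫ s in (0 : ℝ)..1, ∫ t in (0 : ℝ)..1, f (s + y.1, t) := by
        simp_rw [fun s => intervalIntegral_comp_add_right_of_periodic (per_snd s) y.2]
    _ = ∫ s in (0 : ℝ)..1, ∫ t in (0 : ℝ)..1, f (s, t) :=
        intervalIntegral_comp_add_right_of_periodic per_fst y.1
    _ = torusInt f := (torusInt_eq_intervalIntegral hf).symm

/-- Both sides are the double average of `f (x + z.1 • u + z.2 • v)` over `x` and `z`, because each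
inner average is independent of the outer variable. -/
lemma TorusPeriodic.torusInt_comp_intLinear {f : ℝ × ℝ → ℂ} (hp : TorusPeriodic f)
    (hf : Continuous f) {u v : ℤ × ℤ} (huv : u.1 * v.2 - u.2 * v.1 ≠ 0) :
    torusInt (fun z => f (z.1 • toR2 u + z.2 • toR2 v)) = torusInt f := by
  set A : ℝ × ℝ → ℝ × ℝ := fun z => z.1 • toR2 u + z.2 • toR2 v with hA
  have hA_add (z y : ℝ × ℝ) : A (z + y) = A z + A y := by
    simp only [hA, Prod.fst_add, Prod.snd_add, add_smul]
    abel
  have hA_surj (x : ℝ × ℝ) : ∃ y, A y = x := by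
    have hdet : (u.1 : ℝ) * v.2 - u.2 * v.1 ≠ 0 := by exact_mod_cast huv
    refine ⟨((x.1 * v.2 - x.2 * v.1) / (u.1 * v.2 - u.2 * v.1),
      (x.2 * u.1 - x.1 * u.2) / (u.1 * v.2 - u.2 * v.1)), ?_⟩
    ext
    · simp only [hA, toR2, Prod.fst_add, Prod.smul_fst, smul_eq_mul]
      rw [div_mul_eq_mul_div, div_mul_eq_mul_div, ← add_div, div_eq_iff hdet]
      ring
    · simp only [hA, toR2, Prod.snd_add, Prod.smul_snd, smul_eq_mul]
      rw [div_mul_eq_mul_div, div_mul_eq_mul_div, ← add_div, div_eq_iff hdet]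
      ring
  have hpA : TorusPeriodic fun z => f (A z) := fun z j => by
    simp only [hA_add, show A (toR2 j) = toR2 (j.1 • u + j.2 • v) by simp [hA, toR2]]
    exact hp _ _
  have avg_z (x : ℝ × ℝ) : torusInt (fun z => f (x + A z)) = torusInt fun z => f (A z) := by
    obtain ⟨y, rfl⟩ := hA_surj x
    simpa only [hA_add, add_comm] using hpA.torusInt_comp_add_right (by fun_prop) y
  have swap : torusInt (fun x => torusInt fun z => f (x + A z)) =
      torusInt fun z => torusInt fun x => f (x + A z) :=
    setIntegral_setIntegral_swap_of_isCompact isCompact_Icc isCompact_Icc (by fun_prop)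
  simpa only [avg_z, hp.torusInt_comp_add_right hf, torusInt_const] using swap

lemma TorusPeriodic.fderiv_apply {f : ℝ × ℝ → ℂ} (hp : TorusPeriodic f) (v : ℝ × ℝ) :
    TorusPeriodic fun x => fderiv ℝ f x v := fun x j => by
  simp only [← fderiv_comp_add_right, show (fun x => f (x + toR2 j)) = f from funext (hp · j)]

lemma TorusPeriodic.torusInt_fderiv_apply {f : ℝ × ℝ → ℂ} (hp : TorusPeriodic f)
    (hf : ContDiff ℝ 1 f) (v : ℝ × ℝ) : torusInt (fun x => fderiv ℝ f x v) = 0 := by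
  set f' : ℝ × ℝ → ℂ := fun x => fderiv ℝ f x v
  have hf' : Continuous f' := (hf.continuous_fderiv (by simp)).clm_apply continuous_const
  have ftc (x : ℝ × ℝ) : ∫ s in Set.Icc (0 : ℝ) 1, f' (x + s • v) = f (x + v) - f x := by
    have hderiv (s : ℝ) : HasDerivAt (fun s : ℝ => f (x + s • v)) (f' (x + s • v)) s :=
      ((hf.differentiable (by simp)) _).hasFDerivAt.comp_hasDerivAt s
        (by simpa using ((hasDerivAt_id s).smul_const v).const_add x)
    rw [integral_Icc_eq_integral_Ioc, ← intervalIntegral.integral_of_le zero_le_one,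
      intervalIntegral.integral_eq_sub_of_hasDerivAt (fun s _ => hderiv s)
        (Continuous.intervalIntegrable (by fun_prop) _ _)]
    simp
  calc torusInt f'
      = ∫ s in Set.Icc (0 : ℝ) 1, torusInt fun x => f' (x + s • v) := by
        simp [(hp.fderiv_apply v).torusInt_comp_add_right hf', f']
    _ = torusInt fun x => ∫ s in Set.Icc (0 : ℝ) 1, f' (x + s • v) :=
        setIntegral_setIntegral_swap_of_isCompact isCompact_Icc isCompact_Icc (by fun_prop)
    _ = torusInt (fun x => f (x + v)) - torusInt f := by
        simp only [ftc]
        exact integral_sub (Continuous.integrableOn_Icc (by fun_prop))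
          (Continuous.integrableOn_Icc hf.continuous)
    _ = 0 := by rw [hp.torusInt_comp_add_right hf.continuous, sub_self]

/-! ### Fourier coefficients on the torus -/

/-- The `j`-th Fourier coefficient of a function on `𝕋²`, for which `fcoef` is the version with
a parameter. -/
def torusCoeff (f : ℝ × ℝ → ℂ) (j : ℤ × ℤ) : ℂ :=
  torusInt fun x => f x * expI (-(2 * π * dot2 (toR2 j) x))

lemma torusPeriodic_expI (j : ℤ × ℤ) :
    TorusPeriodic fun x => expI (-(2 * π * dot2 (toR2 j) x)) := fun x k => by
  have hshift : -(2 * π * dot2 (toR2 j) (x + toR2 k)) =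
      -(2 * π * dot2 (toR2 j) x) + 2 * π * (-(j.1 * k.1 + j.2 * k.2) : ℤ) := by
    simp only [dot2, toR2, Prod.fst_add, Prod.snd_add]
    push_cast
    ring
  simp only [hshift, expI_add, expI_two_pi_mul_intCast, mul_one]

lemma TorusPeriodic.mul_expI {f : ℝ × ℝ → ℂ} (hp : TorusPeriodic f) (j : ℤ × ℤ) :
    TorusPeriodic fun x => f x * expI (-(2 * π * dot2 (toR2 j) x)) := fun x k =>
  congrArg₂ (· * ·) (hp x k) (torusPeriodic_expI j x k)

lemma norm_torusCoeff_le {f : ℝ × ℝ → ℂ} {C : ℝ} (hf : ∀ x, ‖f x‖ ≤ C) (j : ℤ × ℤ) :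
    ‖torusCoeff f j‖ ≤ C :=
  norm_torusInt_le fun x => by rw [norm_mul, norm_expI, mul_one]; exact hf x

lemma TorusPeriodic.torusCoeff_fderiv_apply {f : ℝ × ℝ → ℂ} (hp : TorusPeriodic f)
    (hf : ContDiff ℝ 1 f) (j : ℤ × ℤ) (v : ℝ × ℝ) :
    torusCoeff (fun x => fderiv ℝ f x v) j =
      2 * π * Complex.I * dot2 (toR2 j) v * torusCoeff f j := by
  set χ : ℝ × ℝ → ℂ := fun x => expI (-(2 * π * dot2 (toR2 j) x)) with hχ
  have hχ_smooth : ContDiff ℝ 1 χ := by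
    unfold χ dot2
    exact contDiff_expI.comp (by fun_prop)
  have hχ_deriv (x : ℝ × ℝ) : fderiv ℝ χ x v = -(2 * π * Complex.I * dot2 (toR2 j) v) * χ x := by
    set θ : (ℝ × ℝ) →L[ℝ] ℝ :=
      -(2 * π) • ((j.1 : ℝ) • ContinuousLinearMap.fst ℝ ℝ ℝ + (j.2 : ℝ) • .snd ℝ ℝ ℝ)
    have hθ (x : ℝ × ℝ) : -(2 * π * dot2 (toR2 j) x) = θ x := by
      simp [θ, dot2, toR2]
      ring
    have hderiv : HasFDerivAt (fun x => expI (θ x)) _ x :=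
      (hasDerivAt_expI (θ x)).hasFDerivAt.comp x θ.hasFDerivAt
    simp only [hχ, hθ]
    rw [hderiv.fderiv]
    simp [← hθ]
    ring
  have hprod (x : ℝ × ℝ) : fderiv ℝ (fun x => f x * χ x) x v =
      fderiv ℝ f x v * χ x - 2 * π * Complex.I * dot2 (toR2 j) v * (f x * χ x) := by
    rw [fderiv_fun_mul (hf.differentiable one_ne_zero x) (hχ_smooth.differentiable one_ne_zero x)]
    simp only [add_apply, smul_apply, smul_eq_mul, hχ_deriv]
    ring
  have hf'χ : IntegrableOn (fun x => fderiv ℝ f x v * χ x) (Set.Icc (0, 0) (1, 1)) :=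
    (((hf.continuous_fderiv one_ne_zero).clm_apply continuous_const).mul
      hχ_smooth.continuous).integrableOn_Icc
  have hfχ : IntegrableOn (fun x => f x * χ x) (Set.Icc (0, 0) (1, 1)) :=
    (hf.continuous.mul hχ_smooth.continuous).integrableOn_Icc
  have hzero := (hp.mul_expI j).torusInt_fderiv_apply (hf.mul hχ_smooth) v
  rw [funext hprod, torusInt, integral_sub hf'χ (hfχ.const_mul _), integral_const_mul,
    sub_eq_zero] at hzero
  exact hzero

lemma TorusPeriodic.norm_torusCoeff_le_div_sq {f : ℝ × ℝ → ℂ} (hp : TorusPeriodic f)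
    (hf : ContDiff ℝ 2 f) {v : ℝ × ℝ} {M : ℝ}
    (hM : ∀ x, ‖fderiv ℝ (fun y => fderiv ℝ f y v) x v‖ ≤ M) {j : ℤ × ℤ}
    (hj : dot2 (toR2 j) v ≠ 0) : ‖torusCoeff f j‖ ≤ M / (2 * π * dot2 (toR2 j) v) ^ 2 := by
  have hf' : ContDiff ℝ 1 fun x => fderiv ℝ f x v :=
    (hf.fderiv_right (by norm_num)).clm_apply contDiff_const
  have h := norm_torusCoeff_le hM j
  rw [(hp.fderiv_apply v).torusCoeff_fderiv_apply hf',
    hp.torusCoeff_fderiv_apply (hf.of_le (by norm_num)), ← mul_assoc, ← sq, norm_mul] at h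
  rw [le_div_iff₀ (by positivity)]
  convert! h using 1
  rw [mul_comm, norm_pow]
  simp [mul_pow]

/-! ### Fourier series along a line of frequencies -/

lemma hasSum_intervalIntegral_mul_expI {b : ℝ → ℂ} (hb : Continuous b)
    (hper : Function.Periodic b 1)
    (hsum : Summable fun c : ℤ => ∫ s in (0 : ℝ)..1, b s * expI (-(2 * π * (c * s)))) :
    HasSum (fun c : ℤ => ∫ s in (0 : ℝ)..1, b s * expI (-(2 * π * (c * s)))) (b 0) := by
  have : Fact ((0 : ℝ) < 1) := ⟨zero_lt_one⟩
  let g : C(AddCircle (1 : ℝ), ℂ) := ⟨hper.lift, hb.quotient_lift _⟩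
  have hg (c : ℤ) : fourierCoeff g c = ∫ s in (0 : ℝ)..1, b s * expI (-(2 * π * (c * s))) := by
    rw [fourierCoeff_eq_intervalIntegral _ _ 0, zero_add, div_one, one_smul]
    refine intervalIntegral.integral_congr fun s _ => ?_
    rw [fourier_coe_apply, smul_eq_mul, mul_comm]
    simp only [expI]
    congr 2
    push_cast
    ring
  have h := has_pointwise_sum_fourier_series_of_summable (f := g)
    (by simpa only [← hg] using hsum) ((0 : ℝ) : AddCircle (1 : ℝ))
  rw [show g ((0 : ℝ) : AddCircle (1 : ℝ)) = b 0 from hper.lift_coe 0] at h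
  simpa [hg] using h

lemma torusCoeff_zsmul_mul_expI {f : ℝ × ℝ → ℂ} (hp : TorusPeriodic f) (hf : Continuous f)
    {u w : ℤ × ℤ} (huw : u.1 * w.1 + u.2 * w.2 = 1) (x₀ : ℝ × ℝ) (c : ℤ) :
    torusCoeff f (c • w) * expI (2 * π * (c * dot2 (toR2 w) x₀)) =
      ∫ s in (0 : ℝ)..1, (∫ t in (0 : ℝ)..1, f (x₀ + (s • toR2 u + t • toR2 (perpZ w)))) *
        expI (-(2 * π * (c * s))) := by
  set F : ℝ × ℝ → ℂ := fun x => f x * expI (-(2 * π * dot2 (toR2 (c • w)) x)) with hF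
  have hFc : Continuous F := by
    unfold F dot2
    fun_prop
  have hFp : TorusPeriodic F := hp.mul_expI _
  have hFp' : TorusPeriodic fun x => F (x₀ + x) := fun x j => by
    simp only [← add_assoc, hFp (x₀ + x) j]
  have hphase (z : ℝ × ℝ) : F (x₀ + (z.1 • toR2 u + z.2 • toR2 (perpZ w))) *
      expI (2 * π * (c * dot2 (toR2 w) x₀)) =
        f (x₀ + (z.1 • toR2 u + z.2 • toR2 (perpZ w))) * expI (-(2 * π * (c * z.1))) := by
    have huw' : (u.1 : ℝ) * w.1 + u.2 * w.2 = 1 := by exact_mod_cast huw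
    rw [hF, mul_assoc, ← expI_add]
    congr 2
    simp [dot2, toR2, perpZ]
    linear_combination (-2 * π * c * z.1) * huw'
  have hdet : u.1 * (perpZ w).2 - u.2 * (perpZ w).1 ≠ 0 := by
    rw [perpZ, mul_neg, sub_neg_eq_add, huw]
    exact one_ne_zero
  calc torusCoeff f (c • w) * expI (2 * π * (c * dot2 (toR2 w) x₀))
      = torusInt (fun z => F (x₀ + (z.1 • toR2 u + z.2 • toR2 (perpZ w)))) *
          expI (2 * π * (c * dot2 (toR2 w) x₀)) := by
        rw [hFp'.torusInt_comp_intLinear (by fun_prop) hdet]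
        simp only [add_comm x₀, hFp.torusInt_comp_add_right hFc x₀]
        rfl
    _ = torusInt fun z => f (x₀ + (z.1 • toR2 u + z.2 • toR2 (perpZ w))) *
          expI (-(2 * π * (c * z.1))) := by
        simp only [torusInt, ← integral_mul_const, hphase]
    _ = _ := by
        rw [torusInt_eq_intervalIntegral (by fun_prop)]
        simp only [intervalIntegral.integral_mul_const]

lemma IΛ_eq_intervalIntegral {w : ℤ × ℤ} (hw : w ≠ 0) (a : ℝ × ℝ → ℝ → ℂ) (x : ℝ × ℝ) (η : ℝ) :
    IΛ w a x η = ∫ t in (0 : ℝ)..1, a (x + t • toR2 (perpZ w)) η := by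
  have hL := (LL_pos hw).ne'
  rw [IΛ, intervalIntegral.integral_comp_div (fun t => a (x + t • toR2 (perpZ w)) η) hL]
  simp [hL]

lemma Primitive.hasSum_fcoef_mul_expI {w : ℤ × ℤ} (hw : Primitive w) {a : ℝ × ℝ → ℝ → ℂ} {η : ℝ}
    (hp : TorusPeriodic (a · η)) (ha : Continuous (a · η))
    (hsum : Summable fun c : ℤ => fcoef a (c • w) η) (x₀ : ℝ × ℝ) :
    HasSum (fun c : ℤ => fcoef a (c • w) η * expI (2 * π * (c * dot2 (toR2 w) x₀)))
      (IΛ w a x₀ η) := by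
  obtain ⟨u, huw⟩ := hw.exists_dual
  set b : ℝ → ℂ := fun s =>
    ∫ t in (0 : ℝ)..1, a (x₀ + (s • toR2 u + t • toR2 (perpZ w))) η with hb
  have hb_cont : Continuous b :=
    intervalIntegral.continuous_parametric_intervalIntegral_of_continuous' (by fun_prop) _ _
  have hb_per : Function.Periodic b 1 := fun s => by
    have hshift (t : ℝ) : x₀ + ((s + 1) • toR2 u + t • toR2 (perpZ w)) =
        x₀ + (s • toR2 u + t • toR2 (perpZ w)) + toR2 u := by
      rw [add_smul, one_smul]
      abel
    simp only [hb, hshift, hp _ u]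
  have hcoeff (c : ℤ) : fcoef a (c • w) η * expI (2 * π * (c * dot2 (toR2 w) x₀)) =
      ∫ s in (0 : ℝ)..1, b s * expI (-(2 * π * (c * s))) :=
    torusCoeff_zsmul_mul_expI hp ha huw x₀ c
  have hsum' : Summable fun c : ℤ => fcoef a (c • w) η * expI (2 * π * (c * dot2 (toR2 w) x₀)) :=
    .of_norm (by simpa only [norm_mul, norm_expI, mul_one] using hsum.norm)
  have h := hasSum_intervalIntegral_mul_expI hb_cont hb_per (by simpa only [← hcoeff] using hsum')
  simp only [← hcoeff] at h
  simpa [hb, IΛ_eq_intervalIntegral hw.ne_zero] using h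

/-! ### Symbols -/

/-- A symbol on `𝕋² × ℝ`: a `C^n` function of `(x, η)`, periodic in `x` and compactly supported in
`η`. The regularity `n` is a parameter because differentiation in `x` lowers it. -/
structure IsSymbol (n : WithTop ℕ∞) (a : ℝ × ℝ → ℝ → ℂ) : Prop where
  contDiff : ContDiff ℝ n fun p : (ℝ × ℝ) × ℝ => a p.1 p.2
  periodic : ∀ η, TorusPeriodic (a · η)
  exists_forall_eq_zero : ∃ R : ℝ, ∀ (x : ℝ × ℝ) (η : ℝ), R ≤ |η| → a x η = 0

namespace IsSymbol

variable {n : WithTop ℕ∞} {a : ℝ × ℝ → ℝ → ℂ}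

lemma continuous (ha : IsSymbol n a) : Continuous fun p : (ℝ × ℝ) × ℝ => a p.1 p.2 :=
  ha.contDiff.continuous

lemma contDiff_slice (ha : IsSymbol n a) (η : ℝ) : ContDiff ℝ n (a · η) :=
  ha.contDiff.comp (contDiff_prodMk_left η)

lemma fderiv_apply {m : WithTop ℕ∞} (ha : IsSymbol n a) (hmn : m + 1 ≤ n) (v : ℝ × ℝ) :
    IsSymbol m fun x η => fderiv ℝ (a · η) x v := by
  obtain ⟨R, hR⟩ := ha.exists_forall_eq_zero
  refine ⟨?_, fun η => (ha.periodic η).fderiv_apply v, R, fun x η hη => ?_⟩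
  · have hslice (p : (ℝ × ℝ) × ℝ) : fderiv ℝ (a · p.2) p.1 v =
        fderiv ℝ (fun q : (ℝ × ℝ) × ℝ => a q.1 q.2) p (v, 0) := by
      have hdiff := (ha.contDiff.of_le (le_add_self.trans hmn)).differentiable one_ne_zero
      have hcomp := (hdiff p).hasFDerivAt.comp (f := fun x => (x, p.2)) p.1
        (hasFDerivAt_prodMk_left p.1 p.2)
      exact DFunLike.congr_fun hcomp.fderiv v
    simpa only [hslice] using (ha.contDiff.fderiv_right hmn).clm_apply contDiff_const
  · simp [hR _ η hη]

lemma exists_norm_le (ha : IsSymbol n a) : ∃ M, ∀ x η, ‖a x η‖ ≤ M := by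
  obtain ⟨R, hR⟩ := ha.exists_forall_eq_zero
  obtain ⟨M, hM⟩ := ((isCompact_Icc (a := ((0, 0) : ℝ × ℝ)) (b := (1, 1))).prod
    (isCompact_Icc (a := -R) (b := R))).exists_bound_of_continuousOn ha.continuous.continuousOn
  refine ⟨max M 0, fun x η => ?_⟩
  by_cases hη : R ≤ |η|
  · simp [hR x η hη]
  set y : ℝ × ℝ := (Int.fract x.1, Int.fract x.2)
  have hy : y ∈ Set.Icc ((0, 0) : ℝ × ℝ) (1, 1) :=
    ⟨⟨Int.fract_nonneg _, Int.fract_nonneg _⟩, (Int.fract_lt_one _).le, (Int.fract_lt_one _).le⟩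
  have hxy : y + toR2 (⌊x.1⌋, ⌊x.2⌋) = x := by
    ext
    · exact Int.fract_add_floor x.1
    · exact Int.fract_add_floor x.2
  have hay : a x η = a y η := by simpa only [hxy] using ha.periodic η y (⌊x.1⌋, ⌊x.2⌋)
  rw [hay]
  exact (hM (y, η) ⟨hy, abs_le.1 (not_le.1 hη).le⟩).trans (le_max_left M 0)

lemma exists_summable_norm_fcoef_le (ha : IsSymbol 2 a) {w : ℤ × ℤ} (hw : w ≠ 0) :
    ∃ B : ℤ → ℝ, Summable B ∧ ∀ c η, ‖fcoef a (c • w) η‖ ≤ B c := by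
  obtain ⟨M₀, hM₀⟩ := ha.exists_norm_le
  obtain ⟨M₂, hM₂⟩ := ((ha.fderiv_apply (m := 1) (by norm_num) (toR2 w)).fderiv_apply
    (m := 0) (by norm_num) (toR2 w)).exists_norm_le
  set q := dot2 (toR2 w) (toR2 w)
  have hq : 0 < q := dot2_toR2_self_pos hw
  have hdot (c : ℤ) : dot2 (toR2 (c • w)) (toR2 w) = c * q := by
    rw [toR2_zsmul, dot2_smul_left]
  refine ⟨Function.update (fun c : ℤ => M₂ / (2 * π * (c * q)) ^ 2) 0 M₀, ?_, fun c η => ?_⟩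
  · refine Summable.update ?_ 0 M₀
    refine ((Real.summable_one_div_int_pow.2 one_lt_two).mul_left
      (M₂ / (2 * π * q) ^ 2)).congr fun c => ?_
    rw [div_mul_div_comm, mul_one, ← mul_pow]
    ring_nf
  rcases eq_or_ne c 0 with rfl | hc
  · rw [Function.update_self]
    exact norm_torusCoeff_le (hM₀ · η) _
  · rw [Function.update_of_ne hc, ← hdot]
    refine (ha.periodic η).norm_torusCoeff_le_div_sq (ha.contDiff_slice η) (hM₂ · η) ?_
    rw [hdot]
    exact mul_ne_zero (Int.cast_ne_zero.2 hc) hq.ne'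

lemma continuous_fcoef (ha : IsSymbol n a) (j : ℤ × ℤ) : Continuous (fcoef a j) := by
  refine continuous_parametric_integral_of_continuous ?_ isCompact_Icc
  have hswap : Continuous fun p : ℝ × (ℝ × ℝ) => a p.2 p.1 := ha.continuous.comp continuous_swap
  unfold Function.uncurry dot2
  exact hswap.mul (by fun_prop)

end IsSymbol

/-! ### The Fourier transform -/

/-- The inner product `dot2` as a continuous bilinear map. -/
def dotL : (ℝ × ℝ) →L[ℝ] (ℝ × ℝ) →L[ℝ] ℝ :=
  (ContinuousLinearMap.mul ℝ ℝ).bilinearComp (.fst ℝ ℝ ℝ) (.fst ℝ ℝ ℝ) +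
    (ContinuousLinearMap.mul ℝ ℝ).bilinearComp (.snd ℝ ℝ ℝ) (.snd ℝ ℝ ℝ)

lemma dotL_apply (v w : ℝ × ℝ) : dotL v w = dot2 v w := by
  simp [dotL, dot2]

lemma FT_eq_fourierIntegral (φ : ℝ × ℝ → ℂ) :
    FT φ = VectorFourier.fourierIntegral Real.fourierChar volume dotL.toLinearMap₁₂ φ := by
  ext ξ
  refine integral_congr_ae (ae_of_all _ fun x => ?_)
  have hdot : dotL.toLinearMap₁₂ x ξ = dot2 x ξ := dotL_apply x ξ
  simp only [hdot, Circle.smul_def, Real.fourierChar_apply, smul_eq_mul, expI]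
  rw [mul_comm]
  congr 2
  push_cast
  ring

lemma continuous_FT {φ : ℝ × ℝ → ℂ} (hφ : Integrable φ) : Continuous (FT φ) := by
  rw [FT_eq_fourierIntegral]
  exact VectorFourier.fourierIntegral_continuous Real.continuous_fourierChar dotL.continuous₂ hφ

lemma norm_FT_le (φ : ℝ × ℝ → ℂ) (ξ : ℝ × ℝ) : ‖FT φ ξ‖ ≤ ∫ x, ‖φ x‖ := by
  rw [FT_eq_fourierIntegral]
  exact VectorFourier.norm_fourierIntegral_le_integral_norm ..

lemma exists_abs_dot2_pow_mul_norm_FT_le {φ : ℝ × ℝ → ℂ} {n : ℕ} (hφ : ContDiff ℝ n φ)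
    (hsupp : HasCompactSupport φ) (v : ℝ × ℝ) :
    ∃ C, ∀ ξ, |dot2 v ξ| ^ n * ‖FT φ ξ‖ ≤ C := by
  have hint (k m : ℕ) (_ : (k : ℕ∞) ≤ 0) (hm : (m : ℕ∞) ≤ n) :
      Integrable (fun x => ‖x‖ ^ k * ‖iteratedFDeriv ℝ m φ x‖) (volume : Measure (ℝ × ℝ)) := by
    have hcont : Continuous (iteratedFDeriv ℝ m φ) :=
      hφ.continuous_iteratedFDeriv (by exact_mod_cast hm)
    exact Continuous.integrable_of_hasCompactSupport (by fun_prop)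
      (hsupp.iteratedFDeriv m).norm.mul_left
  have h (ξ : ℝ × ℝ) := VectorFourier.pow_mul_norm_iteratedFDeriv_fourierIntegral_le dotL (N := n)
    hφ hint (k := 0) (n := n) le_rfl le_rfl v ξ
  simp only [norm_iteratedFDeriv_zero, ← FT_eq_fourierIntegral, dotL_apply] at h
  exact ⟨_, h⟩

lemma exists_norm_FT_le_rpow {φ : ℝ × ℝ → ℂ} {n : ℕ} (hφ : ContDiff ℝ n φ)
    (hsupp : HasCompactSupport φ) : ∃ C, ∀ ξ, ‖FT φ ξ‖ ≤ C * (1 + ‖ξ‖) ^ (-(n : ℝ)) := by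
  obtain ⟨C₁, h₁⟩ := exists_abs_dot2_pow_mul_norm_FT_le hφ hsupp (1, 0)
  obtain ⟨C₂, h₂⟩ := exists_abs_dot2_pow_mul_norm_FT_le hφ hsupp (0, 1)
  simp only [dot2, one_mul, zero_mul, add_zero, zero_add] at h₁ h₂
  set C₀ := ∫ x, ‖φ x‖
  refine ⟨2 ^ (n - 1) * (C₀ + max C₁ C₂), fun ξ => ?_⟩
  have hpow : ‖ξ‖ ^ n * ‖FT φ ξ‖ ≤ max C₁ C₂ := by
    rw [Prod.norm_def]
    rcases max_choice ‖ξ.1‖ ‖ξ.2‖ with h | h <;> rw [h, Real.norm_eq_abs]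
    · exact (h₁ ξ).trans (le_max_left _ _)
    · exact (h₂ ξ).trans (le_max_right _ _)
  rw [Real.rpow_neg (by positivity), Real.rpow_natCast, ← div_eq_mul_inv,
    le_div_iff₀ (by positivity), mul_comm]
  calc (1 + ‖ξ‖) ^ n * ‖FT φ ξ‖
      ≤ 2 ^ (n - 1) * (1 ^ n + ‖ξ‖ ^ n) * ‖FT φ ξ‖ := by
        gcongr
        exact add_pow_le zero_le_one (norm_nonneg ξ) n
    _ = 2 ^ (n - 1) * (‖FT φ ξ‖ + ‖ξ‖ ^ n * ‖FT φ ξ‖) := by ring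
    _ ≤ 2 ^ (n - 1) * (C₀ + max C₁ C₂) := by
        gcongr
        exact norm_FT_le φ ξ

/-! ### Riemann sums over rescaled lattices -/

section RiemannSums

variable {E : Type*} [NormedAddCommGroup E] [NormedSpace ℝ E] [CompleteSpace E]

/-- The coordinatewise floor, which identifies `ℤ²` with a partition of the plane into unit
squares. -/
def latticeFloor (x : ℝ × ℝ) : ℤ × ℤ := (⌊x.1⌋, ⌊x.2⌋)

/-- The points of the rescaled translated lattice `r (ℤ² - y)`. -/
def latticePoint (r : ℝ) (y : ℝ × ℝ) (m : ℤ × ℤ) : ℝ × ℝ := r • (toR2 m - y)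

/-- The point of the lattice `r (ℤ² - y)` at the lower left corner of the cell containing `ξ`. -/
def latticeRound (r : ℝ) (y ξ : ℝ × ℝ) : ℝ × ℝ :=
  latticePoint r y (latticeFloor (r⁻¹ • ξ + y))

lemma measurable_latticeFloor : Measurable latticeFloor :=
  (Int.measurable_floor.comp measurable_fst).prodMk (Int.measurable_floor.comp measurable_snd)

lemma volume_real_latticeFloor_preimage (m : ℤ × ℤ) :
    volume.real (latticeFloor ⁻¹' {m}) = 1 := by
  have hcell : latticeFloor ⁻¹' {m} =
      Set.Ico (m.1 : ℝ) (m.1 + 1) ×ˢ Set.Ico (m.2 : ℝ) (m.2 + 1) := by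
    ext x
    simp [latticeFloor, Prod.ext_iff, Int.floor_eq_iff]
  simp [hcell, measureReal_def, Measure.volume_eq_prod]

lemma tsum_eq_integral_comp_latticeFloor {V : ℤ × ℤ → E}
    (hV : Integrable fun x => V (latticeFloor x)) : ∑' m, V m = ∫ x, V (latticeFloor x) := by
  have hfloor : AEMeasurable latticeFloor (volume : Measure (ℝ × ℝ)) :=
    measurable_latticeFloor.aemeasurable
  have hVm : AEStronglyMeasurable V (Measure.map latticeFloor volume) :=
    StronglyMeasurable.of_discrete.aestronglyMeasurable
  rw [← integral_map hfloor hVm, integral_countable ((integrable_map_measure hVm hfloor).2 hV)]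
  refine tsum_congr fun m => ?_
  rw [map_measureReal_apply measurable_latticeFloor (measurableSet_singleton m),
    volume_real_latticeFloor_preimage, one_smul]

lemma sq_smul_tsum_latticePoint_eq_integral {F : ℝ × ℝ → E} {r : ℝ} (hr : r ≠ 0) (y : ℝ × ℝ)
    (hF : Integrable fun ξ => F (latticeRound r y ξ)) :
    r ^ 2 • ∑' m, F (latticePoint r y m) = ∫ ξ, F (latticeRound r y ξ) := by
  set V : ℝ × ℝ → E := fun x => F (latticePoint r y (latticeFloor x))
  have hV_shift : Integrable fun x => V (x + y) :=
    (integrable_comp_smul_iff volume (fun x => V (x + y)) (inv_ne_zero hr)).1 hF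
  have hV : Integrable V := by simpa using hV_shift.comp_add_right (-y)
  have hscale : ∫ ξ, F (latticeRound r y ξ) = r ^ 2 • ∫ x, V (x + y) := by
    change ∫ ξ, V (r⁻¹ • ξ + y) = _
    simpa using Measure.integral_comp_smul volume (fun x => V (x + y)) r⁻¹
  rw [hscale, integral_add_right_eq_self V y,
    tsum_eq_integral_comp_latticeFloor (V := fun m => F (latticePoint r y m)) hV]

lemma norm_latticeRound_sub_le {r : ℝ} (hr : 0 < r) (y ξ : ℝ × ℝ) :
    ‖latticeRound r y ξ - ξ‖ ≤ r := by
  have hcoord (s t : ℝ) : ‖r * (⌊r⁻¹ * s + t⌋ - t) - s‖ ≤ r := by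
    have hfract : r * (⌊r⁻¹ * s + t⌋ - t) - s = -(r * Int.fract (r⁻¹ * s + t)) := by
      rw [Int.fract]
      field_simp
      ring
    rw [hfract, norm_neg, norm_mul, Real.norm_of_nonneg hr.le,
      Real.norm_of_nonneg (Int.fract_nonneg _)]
    exact mul_le_of_le_one_right hr.le (Int.fract_lt_one _).le
  exact max_le (hcoord ξ.1 y.1) (hcoord ξ.2 y.2)

lemma tendsto_latticeRound {ι : Type*} {l : Filter ι} {r : ι → ℝ}
    (hr : Tendsto r l (𝓝[>] 0)) (y : ι → ℝ × ℝ) (ξ : ℝ × ℝ) :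
    Tendsto (fun i => latticeRound (r i) (y i) ξ) l (𝓝 ξ) := by
  obtain ⟨hr₀, hr_pos⟩ := tendsto_nhdsWithin_iff.1 hr
  rw [tendsto_iff_norm_sub_tendsto_zero]
  refine squeeze_zero' (.of_forall fun _ => norm_nonneg _) ?_ hr₀
  filter_upwards [hr_pos] with i hi using norm_latticeRound_sub_le hi (y i) ξ

lemma rpow_one_add_norm_neg_le_of_norm_sub_le_one {G : Type*} [SeminormedAddCommGroup G] {s : ℝ}
    (hs : 0 ≤ s) {ξ ζ : G} (h : ‖ζ - ξ‖ ≤ 1) :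
    (1 + ‖ζ‖) ^ (-s) ≤ 2 ^ s * (1 + ‖ξ‖) ^ (-s) := by
  have hle : 1 + ‖ξ‖ ≤ 2 * (1 + ‖ζ‖) := by
    linarith [norm_le_norm_add_norm_sub ζ ξ, norm_nonneg ζ]
  rw [Real.rpow_neg (by positivity), Real.rpow_neg (by positivity), ← div_eq_mul_inv,
    le_div_iff₀ (by positivity), inv_mul_le_iff₀ (by positivity), mul_comm,
    ← Real.mul_rpow zero_le_two (by positivity)]
  exact Real.rpow_le_rpow (by positivity) hle hs

theorem tendsto_sq_smul_tsum_latticePoint {ι : Type*} {l : Filter ι} [l.IsCountablyGenerated]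
    {F : ι → ℝ × ℝ → E} {g : ℝ × ℝ → E} {r : ι → ℝ} {y : ι → ℝ × ℝ} {C s : ℝ}
    (hr : Tendsto r l (𝓝[>] 0)) (hs : 2 < s) (hF : ∀ i ξ, ‖F i ξ‖ ≤ C * (1 + ‖ξ‖) ^ (-s))
    (hlim : ∀ (ξ : ℝ × ℝ) (ζ : ι → ℝ × ℝ), Tendsto ζ l (𝓝 ξ) →
      Tendsto (fun i => F i (ζ i)) l (𝓝 (g ξ))) :
    Tendsto (fun i => r i ^ 2 • ∑' m, F i (latticePoint (r i) (y i) m)) l (𝓝 (∫ ξ, g ξ)) := by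
  set G : ι → ℝ × ℝ → E := fun i ξ => F i (latticeRound (r i) (y i) ξ)
  set bound : ℝ × ℝ → ℝ := fun ξ => C * (2 ^ s * (1 + ‖ξ‖) ^ (-s))
  have hbound : Integrable bound :=
    ((integrable_one_add_norm (by simpa using hs)).const_mul _).const_mul _
  have hr_small : ∀ᶠ i in l, r i ∈ Set.Ioc 0 1 := hr.eventually (Ioc_mem_nhdsGT zero_lt_one)
  have hG_le (i : ι) (hi : r i ∈ Set.Ioc 0 1) (ξ : ℝ × ℝ) : ‖G i ξ‖ ≤ bound ξ := by
    have hC : 0 ≤ C := by simpa using (norm_nonneg _).trans (hF i 0)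
    exact (hF i _).trans <| mul_le_mul_of_nonneg_left
      (rpow_one_add_norm_neg_le_of_norm_sub_le_one (by linarith)
        ((norm_latticeRound_sub_le hi.1 (y i) ξ).trans hi.2)) hC
  have hG_meas (i : ι) : AEStronglyMeasurable (G i) :=
    (StronglyMeasurable.of_discrete (f := fun m => F i (latticePoint (r i) (y i) m))
      |>.comp_measurable (measurable_latticeFloor.comp (by fun_prop))).aestronglyMeasurable
  have hint : Tendsto (fun i => ∫ ξ, G i ξ) l (𝓝 (∫ ξ, g ξ)) :=
    tendsto_integral_filter_of_dominated_convergence bound (.of_forall hG_meas)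
      (hr_small.mono fun i hi => ae_of_all _ (hG_le i hi)) hbound
      (ae_of_all _ fun ξ => hlim ξ _ (tendsto_latticeRound hr y ξ))
  refine hint.congr' (hr_small.mono fun i hi => ?_)
  exact (sq_smul_tsum_latticePoint_eq_integral hi.1.ne' (y i)
    (hbound.mono' (hG_meas i) (ae_of_all _ (hG_le i hi)))).symm

end RiemannSums

/-! ### Coherent states -/

/-- The sum over `j = c w ∈ Λ` in `Wcs`, divided by `r² = ħ` and written in the rescaled frequency
`ξ = r (m - ξ₀ / ħ)`, with `η` standing for the second argument of the symbol. -/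
def fiberSum (φ : ℝ × ℝ → ℂ) (x₀ : ℝ × ℝ) (w : ℤ × ℤ) (a : ℝ × ℝ → ℝ → ℂ) (r : ℝ) (ξ : ℝ × ℝ)
    (η : ℝ) : ℂ :=
  ∑' c : ℤ, (starRingEnd ℂ) (FT φ ξ) * FT φ (ξ - (r * c) • toR2 w) *
    (fcoef a (c • w) η * expI (2 * π * (c * dot2 (toR2 w) x₀)))

section FiberSum

variable {φ : ℝ × ℝ → ℂ} {x₀ ξ₀ : ℝ × ℝ} {w : ℤ × ℤ} {a : ℝ × ℝ → ℝ → ℂ} {B : ℤ → ℝ}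

lemma norm_fiberSum_term_le (hB : ∀ c η, ‖fcoef a (c • w) η‖ ≤ B c) (r : ℝ) (ξ : ℝ × ℝ) (η : ℝ)
    (c : ℤ) : ‖(starRingEnd ℂ) (FT φ ξ) * FT φ (ξ - (r * c) • toR2 w) *
      (fcoef a (c • w) η * expI (2 * π * (c * dot2 (toR2 w) x₀)))‖ ≤
      ‖FT φ ξ‖ * (∫ x, ‖φ x‖) * B c := by
  rw [norm_mul, norm_mul, norm_mul, norm_expI, mul_one, RCLike.norm_conj]
  gcongr
  · exact norm_FT_le φ _
  · exact hB c η

lemma norm_fiberSum_le (hB : ∀ c η, ‖fcoef a (c • w) η‖ ≤ B c) (hB_sum : Summable B) (r : ℝ)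
    (ξ : ℝ × ℝ) (η : ℝ) :
    ‖fiberSum φ x₀ w a r ξ η‖ ≤ ‖FT φ ξ‖ * (∫ x, ‖φ x‖) * ∑' c, B c :=
  tsum_of_norm_bounded (hB_sum.hasSum.mul_left _) (norm_fiberSum_term_le hB r ξ η)

lemma continuous_fiberSum (hφ : Integrable φ) (ha : IsSymbol 2 a) (hw : w ≠ 0) :
    Continuous fun p : ℝ × (ℝ × ℝ) × ℝ => fiberSum φ x₀ w a p.1 p.2.1 p.2.2 := by
  obtain ⟨B, hB_sum, hB⟩ := ha.exists_summable_norm_fcoef_le hw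
  have hFT := continuous_FT hφ
  have hcoef (c : ℤ) := ha.continuous_fcoef (c • w)
  have hB_nonneg (c : ℤ) : 0 ≤ B c := (norm_nonneg _).trans (hB c 0)
  refine continuous_tsum (fun c => ?_) (hB_sum.mul_left ((∫ x, ‖φ x‖) * ∫ x, ‖φ x‖)) fun c p => ?_
  · exact ((Complex.continuous_conj.comp (by fun_prop)).mul (by fun_prop)).mul
      (((hcoef c).comp (by fun_prop)).mul continuous_const)
  · refine (norm_fiberSum_term_le hB _ _ _ c).trans ?_
    gcongr
    · exact hB_nonneg c
    · exact norm_FT_le φ _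

lemma fiberSum_eq_zero {η : ℝ} (hη : ∀ x, a x η = 0) (r : ℝ) (ξ : ℝ × ℝ) :
    fiberSum φ x₀ w a r ξ η = 0 := by
  simp [fiberSum, fcoef, torusInt, hη]

lemma Primitive.fiberSum_zero (hw : Primitive w) (ha : IsSymbol 2 a) (ξ : ℝ × ℝ) (η : ℝ) :
    fiberSum φ x₀ w a 0 ξ η = ((‖FT φ ξ‖ ^ 2 : ℝ) : ℂ) * IΛ w a x₀ η := by
  obtain ⟨B, hB_sum, hB⟩ := ha.exists_summable_norm_fcoef_le hw.ne_zero
  have hsum := hw.hasSum_fcoef_mul_expI (ha.periodic η) (ha.contDiff_slice η).continuous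
    (hB_sum.of_norm_bounded (hB · η)) x₀
  simp only [fiberSum, zero_mul, zero_smul, sub_zero]
  rw [tsum_mul_left, hsum.tsum_eq, Complex.conj_mul', Complex.ofReal_pow]

lemma psiF_sub_zsmul {ħ : ℝ} (m : ℤ × ℤ) (c : ℤ) :
    psiF φ x₀ ξ₀ ħ (m - c • w) =
      √ħ * (expI (-(2 * π * dot2 (toR2 m - ħ⁻¹ • ξ₀) x₀)) *
        expI (2 * π * (c * dot2 (toR2 w) x₀))) *
      FT φ (latticePoint √ħ (ħ⁻¹ • ξ₀) m - (√ħ * c) • toR2 w) := by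
  rw [psiF, ← expI_add]
  congr 3
  · simp [dot2, toR2]
    ring
  · ext <;> simp [latticePoint, toR2] <;> ring

lemma conj_psiF_mul_psiF_sub_zsmul {ħ : ℝ} (hħ : 0 ≤ ħ) (m : ℤ × ℤ) (c : ℤ) :
    (starRingEnd ℂ) (psiF φ x₀ ξ₀ ħ m) * psiF φ x₀ ξ₀ ħ (m - c • w) =
      ħ * ((starRingEnd ℂ) (FT φ (latticePoint √ħ (ħ⁻¹ • ξ₀) m)) *
        FT φ (latticePoint √ħ (ħ⁻¹ • ξ₀) m - (√ħ * c) • toR2 w) *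
        expI (2 * π * (c * dot2 (toR2 w) x₀))) := by
  set t := 2 * π * dot2 (toR2 m - ħ⁻¹ • ξ₀) x₀ with ht
  have hphase : expI t * expI (-t) = 1 := by
    rw [← expI_add, add_neg_cancel]
    simp [expI]
  have hsqrt : (√ħ : ℂ) * √ħ = ħ := by exact_mod_cast Real.mul_self_sqrt hħ
  rw [psiF_sub_zsmul, psiF, ← ht, map_mul, map_mul, Complex.conj_ofReal, conj_expI, neg_neg,
    ← hsqrt, ← latticePoint]
  linear_combination (√ħ * √ħ * expI (2 * π * (c * dot2 (toR2 w) x₀)) *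
    (starRingEnd ℂ) (FT φ (latticePoint √ħ (ħ⁻¹ • ξ₀) m)) *
    FT φ (latticePoint √ħ (ħ⁻¹ • ξ₀) m - (√ħ * c) • toR2 w)) * hphase

lemma mul_sq_div_rpow_mul_HH {ħ : ℝ} (hħ : 0 < ħ) (ξ₀ : ℝ × ℝ) (w m : ℤ × ℤ) :
    2 * π * ħ ^ 2 / ħ ^ ((3 : ℝ) / 2) * HH w (toR2 m) =
      2 * π * HH w (latticePoint √ħ (ħ⁻¹ • ξ₀) m + (√ħ)⁻¹ • ξ₀) := by
  have hpoint : latticePoint √ħ (ħ⁻¹ • ξ₀) m + (√ħ)⁻¹ • ξ₀ = √ħ • toR2 m := by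
    have hsqrt : √ħ * ħ⁻¹ = (√ħ)⁻¹ := by
      rw [← div_eq_mul_inv, Real.sqrt_div_self]
    rw [latticePoint, smul_sub, smul_smul, hsqrt, sub_add_cancel]
  have hpow : ħ ^ 2 / ħ ^ ((3 : ℝ) / 2) = √ħ := by
    rw [← Real.rpow_natCast, ← Real.rpow_sub hħ, Real.sqrt_eq_rpow]
    norm_num
  rw [hpoint, HH_smul, mul_div_assoc, hpow, mul_assoc]

lemma Wcs_eq_sq_smul_tsum {ħ : ℝ} (hħ : 0 < ħ) :
    Wcs φ x₀ ξ₀ w a ħ (ħ ^ ((3 : ℝ) / 2)) =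
      √ħ ^ 2 • ∑' m, (fun ξ => fiberSum φ x₀ w a √ħ ξ (2 * π * HH w (ξ + (√ħ)⁻¹ • ξ₀)))
        (latticePoint √ħ (ħ⁻¹ • ξ₀) m) := by
  rw [Real.sq_sqrt hħ.le, ← tsum_const_smul'']
  refine tsum_congr fun m => ?_
  simp only [fiberSum]
  rw [← tsum_const_smul'']
  refine tsum_congr fun c => ?_
  rw [conj_psiF_mul_psiF_sub_zsmul hħ.le, mul_sq_div_rpow_mul_HH hħ, Complex.real_smul]
  ring

end FiberSum

lemma tendsto_sqrt_nhdsGT_zero : Tendsto Real.sqrt (𝓝[>] 0) (𝓝[>] 0) :=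
  tendsto_nhdsWithin_iff.2 ⟨(Real.continuous_sqrt.tendsto' 0 0 Real.sqrt_zero).mono_left
    nhdsWithin_le_nhds, eventually_mem_nhdsWithin.mono fun _ => Real.sqrt_pos.2⟩

section Limits

variable {φ : ℝ × ℝ → ℂ} {C s : ℝ} {a : ℝ × ℝ → ℝ → ℂ} {w : ℤ × ℤ} {ξ₀ : ℝ × ℝ}

lemma tendsto_Wcs_of_tendsto_fiberSum (hs : 2 < s)
    (hφ : ∀ ξ, ‖FT φ ξ‖ ≤ C * (1 + ‖ξ‖) ^ (-s)) (ha : IsSymbol 2 a) (hw : w ≠ 0) {x₀ : ℝ × ℝ}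
    {g : ℝ × ℝ → ℂ}
    (hg : ∀ (ξ : ℝ × ℝ) (ζ : ℝ → ℝ × ℝ), Tendsto ζ (𝓝[>] 0) (𝓝 ξ) →
      Tendsto (fun ħ => fiberSum φ x₀ w a √ħ (ζ ħ) (2 * π * HH w (ζ ħ + (√ħ)⁻¹ • ξ₀)))
        (𝓝[>] 0) (𝓝 (g ξ))) :
    Tendsto (fun ħ => Wcs φ x₀ ξ₀ w a ħ (ħ ^ ((3 : ℝ) / 2))) (𝓝[>] 0) (𝓝 (∫ ξ, g ξ)) := by
  obtain ⟨B, hB_sum, hB⟩ := ha.exists_summable_norm_fcoef_le hw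
  have hB_nonneg : 0 ≤ ∑' c, B c := tsum_nonneg fun c => (norm_nonneg _).trans (hB c 0)
  have hbound (ħ : ℝ) (ξ : ℝ × ℝ) :
      ‖fiberSum φ x₀ w a √ħ ξ (2 * π * HH w (ξ + (√ħ)⁻¹ • ξ₀))‖ ≤
        C * (∫ x, ‖φ x‖) * (∑' c, B c) * (1 + ‖ξ‖) ^ (-s) :=
    calc _ ≤ ‖FT φ ξ‖ * (∫ x, ‖φ x‖) * ∑' c, B c := norm_fiberSum_le hB hB_sum ..
      _ ≤ C * (1 + ‖ξ‖) ^ (-s) * (∫ x, ‖φ x‖) * ∑' c, B c := by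
        gcongr
        exact hφ ξ
      _ = _ := by ring
  refine (tendsto_sq_smul_tsum_latticePoint (y := fun ħ => ħ⁻¹ • ξ₀) tendsto_sqrt_nhdsGT_zero hs
    hbound hg).congr' ?_
  filter_upwards [self_mem_nhdsWithin] with ħ hħ using (Wcs_eq_sq_smul_tsum hħ).symm

lemma tendsto_abs_HH_add_atTop {ζ : ℝ → ℝ × ℝ} {ξ : ℝ × ℝ} (hζ : Tendsto ζ (𝓝[>] 0) (𝓝 ξ))
    (hξ₀ : HH w ξ₀ ≠ 0) :
    Tendsto (fun ħ => |2 * π * HH w (ζ ħ + (√ħ)⁻¹ • ξ₀)|) (𝓝[>] 0) atTop := by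
  have hinv : Tendsto (fun ħ => ‖2 * π * HH w ξ₀ * (√ħ)⁻¹‖) (𝓝[>] 0) atTop := by
    simp only [norm_mul (2 * π * HH w ξ₀)]
    exact (tendsto_norm_atTop_atTop.comp (tendsto_inv_nhdsGT_zero.comp
      tendsto_sqrt_nhdsGT_zero)).const_mul_atTop
        (norm_pos_iff.2 (mul_ne_zero two_pi_pos.ne' hξ₀))
  have hζ' : Tendsto (fun ħ => ‖2 * π * HH w (ζ ħ)‖) (𝓝[>] 0) (𝓝 ‖2 * π * HH w ξ‖) :=
    ((((continuous_HH w).tendsto ξ).comp hζ).const_mul _).norm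
  refine tendsto_atTop_mono (fun ħ => ?_) (hinv.atTop_add hζ'.neg)
  rw [HH_add, HH_smul, ← Real.norm_eq_abs, ← sub_eq_add_neg]
  convert! norm_sub_le_norm_add _ _ using 2
  ring

theorem tendsto_Wcs_zero (hs : 2 < s) (hφ : ∀ ξ, ‖FT φ ξ‖ ≤ C * (1 + ‖ξ‖) ^ (-s))
    (ha : IsSymbol 2 a) (x₀ : ℝ × ℝ) (hξ₀ : dot2 ξ₀ (toR2 w) ≠ 0) :
    Tendsto (fun ħ => Wcs φ x₀ ξ₀ w a ħ (ħ ^ ((3 : ℝ) / 2))) (𝓝[>] 0) (𝓝 0) := by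
  have hw : w ≠ 0 := by
    rintro rfl
    simp [dot2, toR2] at hξ₀
  obtain ⟨R, hR⟩ := ha.exists_forall_eq_zero
  rw [← integral_zero (ℝ × ℝ) ℂ]
  refine tendsto_Wcs_of_tendsto_fiberSum hs hφ ha hw fun ξ ζ hζ => tendsto_const_nhds.congr' ?_
  filter_upwards [(tendsto_abs_HH_add_atTop hζ
    (div_ne_zero hξ₀ (LL_pos hw).ne')).eventually_ge_atTop R] with ħ hħ
  exact (fiberSum_eq_zero (fun x => hR x _ hħ) _ _).symm

theorem tendsto_Wcs_integral_IΛ (hφ_int : Integrable φ) (hs : 2 < s)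
    (hφ : ∀ ξ, ‖FT φ ξ‖ ≤ C * (1 + ‖ξ‖) ^ (-s)) (ha : IsSymbol 2 a) (hw : Primitive w)
    (x₀ : ℝ × ℝ) (hξ₀ : dot2 ξ₀ (toR2 w) = 0) :
    Tendsto (fun ħ => Wcs φ x₀ ξ₀ w a ħ (ħ ^ ((3 : ℝ) / 2))) (𝓝[>] 0)
      (𝓝 (∫ ξ, ((‖FT φ ξ‖ ^ 2 : ℝ) : ℂ) * IΛ w a x₀ (2 * π * HH w ξ))) := by
  have hHH (ξ : ℝ × ℝ) (t : ℝ) : HH w (ξ + t • ξ₀) = HH w ξ := by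
    rw [HH_add, HH_smul, show HH w ξ₀ = 0 by rw [HH, hξ₀, zero_div], mul_zero, add_zero]
  refine tendsto_Wcs_of_tendsto_fiberSum hs hφ ha hw.ne_zero fun ξ ζ hζ => ?_
  simp only [hHH, ← hw.fiberSum_zero ha]
  have hη : Tendsto (fun ħ => 2 * π * HH w (ζ ħ)) (𝓝[>] 0) (𝓝 (2 * π * HH w ξ)) :=
    (((continuous_HH w).tendsto ξ).comp hζ).const_mul _
  have hargs : Tendsto (fun ħ => (√ħ, ζ ħ, 2 * π * HH w (ζ ħ))) (𝓝[>] 0)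
      (𝓝 (0, ξ, 2 * π * HH w ξ)) :=
    (tendsto_nhds_of_tendsto_nhdsWithin tendsto_sqrt_nhdsGT_zero).prodMk_nhds
      (hζ.prodMk_nhds hη)
  have hcont := continuous_fiberSum (x₀ := x₀) hφ_int ha hw.ne_zero
  simpa only [Function.comp_def] using (hcont.tendsto _).comp hargs

end Limits

theorem stmt5_general {φ : ℝ × ℝ → ℂ} (hφ_int : Integrable φ) {C s : ℝ} (hs : 2 < s)
    (hφ : ∀ ξ, ‖FT φ ξ‖ ≤ C * (1 + ‖ξ‖) ^ (-s)) (x₀ ξ₀ : ℝ × ℝ) {a : ℝ × ℝ → ℝ → ℂ}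
    (ha : IsSymbol 2 a) (w : ℤ × ℤ) :
    (dot2 ξ₀ (toR2 w) ≠ 0 →
      Tendsto (fun ħ => Wcs φ x₀ ξ₀ w a ħ (ħ ^ ((3 : ℝ) / 2))) (𝓝[>] 0) (𝓝 0)) ∧
    (Primitive w → dot2 ξ₀ (toR2 w) = 0 →
      Tendsto (fun ħ => Wcs φ x₀ ξ₀ w a ħ (ħ ^ ((3 : ℝ) / 2))) (𝓝[>] 0)
        (𝓝 (∫ ξ, ((‖FT φ ξ‖ ^ 2 : ℝ) : ℂ) * IΛ w a x₀ (2 * π * HH w ξ)))) :=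
  ⟨tendsto_Wcs_zero hs hφ ha x₀, fun hw => tendsto_Wcs_integral_IΛ hφ_int hs hφ ha hw x₀⟩

/-- coherent states, critical perturbations `ε_hb = hb^{3/2}`. -/
theorem stmt5
    (φ : ℝ × ℝ → ℂ) (hφ_smooth : ContDiff ℝ (⊤ : ℕ∞) φ)
    (hφ_supp : ∀ x : ℝ × ℝ, φ x ≠ 0 → |x.1| < 1/2 ∧ |x.2| < 1/2)
    (hφ_norm : ∫ x : ℝ × ℝ, ‖φ x‖ ^ 2 = 1)
    (x₀ ξ₀ : ℝ × ℝ) (hξ₀ : ξ₀ ≠ 0)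
    (a : ℝ × ℝ → ℝ → ℂ)
    (ha_smooth : ContDiff ℝ (⊤ : ℕ∞) fun p : (ℝ × ℝ) × ℝ => a p.1 p.2)
    (ha_per : ∀ (x : ℝ × ℝ) (η : ℝ) (j : ℤ × ℤ), a (x + toR2 j) η = a x η)
    (ha_supp : ∃ R : ℝ, ∀ (x : ℝ × ℝ) (η : ℝ), R ≤ |η| → a x η = 0) :
    ∀ w : ℤ × ℤ, Primitive w →
      (dot2 ξ₀ (toR2 w) ≠ 0 →
        Tendsto (fun hb => Wcs φ x₀ ξ₀ w a hb (hb ^ ((3:ℝ)/2)))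
          (𝓝[>] (0:ℝ)) (𝓝 0))
      ∧
      (dot2 ξ₀ (toR2 w) = 0 →
        Tendsto (fun hb => Wcs φ x₀ ξ₀ w a hb (hb ^ ((3:ℝ)/2)))
          (𝓝[>] (0:ℝ))
          (𝓝 (∫ ξ : ℝ × ℝ, ((‖FT φ ξ‖ ^ 2 : ℝ) : ℂ) * IΛ w a x₀ (2 * π * HH w ξ)))) := by
  intro w hw
  have hsupp := hasCompactSupport_of_abs_lt hφ_supp
  obtain ⟨C, hC⟩ := exists_norm_FT_le_rpow (contDiff_infty.1 hφ_smooth 3) hsupp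
  have ha : IsSymbol 2 a :=
    ⟨contDiff_infty.1 ha_smooth 2, fun η x j => ha_per x η j, ha_supp⟩
  exact (stmt5_general (hφ_smooth.continuous.integrable_of_hasCompactSupport hsupp)
    (by norm_num) hC x₀ ξ₀ ha w).imp_right (· hw)
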